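/- arXiv:2010.11100 — 2 statements merged into one kernel-verified Lean document; each statement's English description precedes it below -/
import Mathlib

section
/- For every integer n ≥ 3, the maximum number of triples in a cgh on Ω_n containing neither a copy of M_1 nor a copy of S_1 equals ∇(n) + ⌊n/2⌋·⌊(n−2)/2⌋; that is, ex_circ(n, {M_1, S_1}) = ∇(n) + ⌊n/2⌋⌊(n−2)/2⌋. -/
/-- The list of points of `ZMod n` occurs in this clockwise cyclic order:
anchored at the first point, the clockwise arc-distances from it are
positive and strictly increasing. -/
def CWList (n : ℕ) : List (ZMod n) → Prop
  | [] => True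
  | a :: l => ((0 : ℕ) :: l.map fun b => (b - a).val).Chain' (· < ·)

/-- `H` is a 3-uniform (convex geometric) hypergraph on `Ω_n = ZMod n`. -/
def IsCgh (n : ℕ) (H : Finset (Finset (ZMod n))) : Prop :=
  ∀ e ∈ H, e.card = 3

def nabla (n : ℕ) : ℕ :=
  if Odd n then n * (n - 1) * (n + 1) / 24 else n * (n - 2) * (n + 2) / 24

/-- `H` contains a copy of the configuration `M₁`: two triples whose six
vertices occur in clockwise cyclic order `a₁, a₂, a₃, b₁, b₂, b₃`. -/
def HasM1 (n : ℕ) (H : Finset (Finset (ZMod n))) : Prop :=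
  ∃ a₁ a₂ a₃ b₁ b₂ b₃ : ZMod n,
    CWList n [a₁, a₂, a₃, b₁, b₂, b₃] ∧
    ({a₁, a₂, a₃} : Finset (ZMod n)) ∈ H ∧ ({b₁, b₂, b₃} : Finset (ZMod n)) ∈ H

/-- `H` contains a copy of the configuration `S₁`: two triples sharing exactly
the vertex `v`, with the five vertices in clockwise cyclic order `v, a₁, a₂, b₁, b₂`. -/
def HasS1 (n : ℕ) (H : Finset (Finset (ZMod n))) : Prop :=
  ∃ v a₁ a₂ b₁ b₂ : ZMod n,
    CWList n [v, a₁, a₂, b₁, b₂] ∧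
    ({v, a₁, a₂} : Finset (ZMod n)) ∈ H ∧ ({v, b₁, b₂} : Finset (ZMod n)) ∈ H

open Finset

/-- The triple `{s, s+x, s+y}`. -/
def triS (n : ℕ) (q : ZMod n × ℕ × ℕ) : Finset (ZMod n) :=
  {q.1, q.1 + (q.2.1 : ZMod n), q.1 + (q.2.2 : ZMod n)}

/-- The closed arc `[s, s+y]` contains a triple of `H`. -/
def HeavyS (n : ℕ) (H : Finset (Finset (ZMod n))) (s : ZMod n) (y : ℕ) : Prop :=
  ∃ i j k : ℕ, i < j ∧ j < k ∧ k ≤ y ∧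
    ({s + (i : ZMod n), s + (j : ZMod n), s + (k : ZMod n)} : Finset (ZMod n)) ∈ H

lemma val_sub_aux (n : ℕ) [NeZero n] (s : ZMod n) (i j : ℕ) (h : i ≤ j) (h2 : j < i + n) :
    ((s + (j : ZMod n)) - (s + (i : ZMod n))).val = j - i := by
  have : (s + (j : ZMod n)) - (s + (i : ZMod n)) = ((j - i : ℕ) : ZMod n) := by
    rw [Nat.cast_sub h]; ring
  rw [this, ZMod.val_natCast, Nat.mod_eq_of_lt (by omega)]

lemma cast_inj_aux (n : ℕ) (a b : ℕ) (ha : a < n) (hb : b < n)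
    (h : (a : ZMod n) = (b : ZMod n)) : a = b := by
  rw [ZMod.natCast_eq_natCast_iff'] at h
  rwa [Nat.mod_eq_of_lt ha, Nat.mod_eq_of_lt hb] at h

lemma heavy_mono (n : ℕ) (H : Finset (Finset (ZMod n))) (s : ZMod n) (d y y' : ℕ)
    (h : d + y ≤ y') (hv : HeavyS n H (s + (d : ZMod n)) y) : HeavyS n H s y' := by
  obtain ⟨i, j, k, h1, h2, h3, h4⟩ := hv
  refine ⟨d + i, d + j, d + k, by omega, by omega, by omega, ?_⟩
  push_cast
  simpa only [add_assoc] using h4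

lemma heavy_conflict (n : ℕ) [NeZero n] (H : Finset (Finset (ZMod n)))
    (hM : ¬ HasM1 n H) (hS : ¬ HasS1 n H) (s : ZMod n) (y d y' : ℕ)
    (hd : y ≤ d) (hdy : d + y' + 1 ≤ n)
    (h1 : HeavyS n H s y) (h2 : HeavyS n H (s + (d : ZMod n)) y') : False := by
  obtain ⟨i, j, k, a1, a2, a3, a4⟩ := h1
  obtain ⟨i', j', k', b1, b2, b3, b4⟩ := h2
  simp only [add_assoc, ← Nat.cast_add] at b4
  by_cases hk : k < d + i'
  · apply hM
    refine ⟨_, _, _, _, _, _, ?_, a4, b4⟩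
    simp only [CWList, List.map, List.Chain', List.isChain_cons_cons, List.isChain_singleton, and_true]
    rw [val_sub_aux, val_sub_aux, val_sub_aux, val_sub_aux, val_sub_aux] <;> try omega
  · apply hS
    have e1 : k = d + i' := by omega
    have e2 : ∀ t : ℕ, s + (t : ZMod n) = s + ((t + n : ℕ) : ZMod n) := by intro t; simp
    refine ⟨s + (k : ZMod n), s + ((d + j' : ℕ) : ZMod n), s + ((d + k' : ℕ) : ZMod n),
      s + ((i + n : ℕ) : ZMod n), s + ((j + n : ℕ) : ZMod n), ?_, ?_, ?_⟩
    · simp only [CWList, List.map, List.Chain', List.isChain_cons_cons, List.isChain_singleton, and_true]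
      rw [val_sub_aux, val_sub_aux, val_sub_aux, val_sub_aux] <;> try omega
    · rw [e1]; exact b4
    · rw [← e2, ← e2]
      convert a4 using 1
      ext t; simp; tauto

lemma heavy_conflict' (n : ℕ) [NeZero n] (H : Finset (Finset (ZMod n)))
    (hM : ¬ HasM1 n H) (hS : ¬ HasS1 n H) (s : ZMod n) (y : ℕ)
    (hy : y + 1 ≤ n)
    (h1 : HeavyS n H s y) (h2 : HeavyS n H (s + ((y + 1 : ℕ) : ZMod n)) (n - 1 - y)) : False := by
  refine heavy_conflict n H hM hS _ (n - 1 - y) (n - 1 - y) y le_rfl (by omega) h2 ?_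
  have : s + ((y + 1 : ℕ) : ZMod n) + ((n - 1 - y : ℕ) : ZMod n) = s := by
    rw [add_assoc, ← Nat.cast_add]
    have : y + 1 + (n - 1 - y) = n := by omega
    rw [this]; simp
  rwa [this]

open Classical in
/-- Pointed triples whose base arc satisfies `P`. -/
noncomputable def BS (n : ℕ) [NeZero n] (P : ZMod n → ℕ → Prop) : Finset (ZMod n × ℕ × ℕ) :=
  (univ ×ˢ (range n ×ˢ range n)).filter (fun q => 0 < q.2.1 ∧ q.2.1 < q.2.2 ∧ P q.1 q.2.2)

open Classical in
/-- Number of base points. -/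
noncomputable def cS (n : ℕ) [NeZero n] (P : ZMod n → ℕ → Prop) (y : ℕ) : ℕ :=
  (univ.filter (fun s : ZMod n => P s y)).card

lemma card_BS (n : ℕ) [NeZero n] (P : ZMod n → ℕ → Prop) :
    (BS n P).card = ∑ y ∈ range n, cS n P y * (y - 1) := by
  classical
  have h1 : ∀ q ∈ BS n P, q.2.2 ∈ range n := by
    intro q hq
    simp only [BS, mem_filter, mem_product] at hq
    exact hq.1.2.2
  rw [card_eq_sum_card_fiberwise h1]
  refine sum_congr rfl fun y hy => ?_
  have h2 : (y - 1) = (Ioo 0 y).card := by simp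
  rw [cS, h2, ← card_product]
  refine card_bij' (fun q _ => (q.1, q.2.1)) (fun r _ => (r.1, r.2, y)) ?_ ?_ ?_ ?_
  · rintro ⟨s, x, z⟩ hq
    simp [BS] at hq ⊢
    obtain ⟨⟨_, h3, h4, h5⟩, rfl⟩ := hq
    exact ⟨h5, h3, h4⟩
  · rintro ⟨s, x⟩ hq
    simp [BS] at hq hy ⊢
    exact ⟨⟨by omega, hy⟩, hq.2.1, hq.2.2, hq.1⟩
  · rintro ⟨s, x, z⟩ hq
    simp [BS] at hq ⊢
    exact hq.2.symm
  · rintro ⟨s, x⟩ hq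
    rfl

lemma tri_inj (n : ℕ) [NeZero n] (s s' : ZMod n) (x y x' y' : ℕ)
    (hx : 0 < x) (hxy : x < y) (hy : y < n) (hx' : 0 < x') (hxy' : x' < y') (hy' : y' < n)
    (h : triS n (s, x, y) = triS n (s', x', y')) :
    (s' = s ∧ x' = x ∧ y' = y) ∨ (s' = s + (x : ZMod n) ∧ x' = y - x ∧ y' = n - x) ∨
    (s' = s + (y : ZMod n) ∧ x' = n - y ∧ y' = n - y + x) := by
  have hs : s' ∈ triS n (s, x, y) := by rw [h]; simp [triS]
  have h1 : s' + (x' : ZMod n) ∈ triS n (s, x, y) := by rw [h]; simp [triS]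
  have h2 : s' + (y' : ZMod n) ∈ triS n (s, x, y) := by rw [h]; simp [triS]
  simp only [triS, mem_insert, mem_singleton] at hs h1 h2
  -- offsets of points with respect to the base point s
  have key : ∀ a b t : ℕ, a < n → b < n → t < n →
      s + (a : ZMod n) + (t : ZMod n) = s + (b : ZMod n) → a + t = b ∨ a + t = b + n := by
    intro a b t ha hb ht he
    rw [add_assoc, add_right_inj, ← Nat.cast_add, ZMod.natCast_eq_natCast_iff'] at he
    rw [Nat.mod_eq_of_lt hb] at he
    by_cases hh : a + t < n
    · rw [Nat.mod_eq_of_lt hh] at he; omega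
    · rw [Nat.mod_eq_sub_mod (by omega), Nat.mod_eq_of_lt (by omega)] at he; omega
  have k2 : ∀ a t : ℕ, a < n → t < n →
      s' = s + (a : ZMod n) → (s' + (t : ZMod n) = s ∨ s' + (t : ZMod n) = s + (x : ZMod n) ∨
        s' + (t : ZMod n) = s + (y : ZMod n)) →
      (a + t = 0 ∨ a + t = n ∨ a + t = x ∨ a + t = x + n ∨ a + t = y ∨ a + t = y + n) := by
    intro a t ha ht he hh
    subst he
    rcases hh with hh | hh | hh
    · have := key a 0 t ha (by omega) ht (by simpa using hh)
      omega
    · have := key a x t ha (by omega) ht hh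
      omega
    · have := key a y t ha (by omega) ht hh
      omega
  rcases hs with hs | hs | hs
  · left
    have e1 := k2 0 x' (by omega) (by omega) (by simpa using hs) h1
    have e2 := k2 0 y' (by omega) (by omega) (by simpa using hs) h2
    refine ⟨hs, ?_, ?_⟩ <;> omega
  · right; left
    have e1 := k2 x x' (by omega) (by omega) hs h1
    have e2 := k2 x y' (by omega) (by omega) hs h2
    refine ⟨hs, ?_, ?_⟩ <;> omega
  · right; right
    have e1 := k2 y x' (by omega) (by omega) hs h1
    have e2 := k2 y y' (by omega) (by omega) hs h2
    refine ⟨hs, ?_, ?_⟩ <;> omega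

lemma tri_card (n : ℕ) [NeZero n] (s : ZMod n) (x y : ℕ)
    (hx : 0 < x) (hxy : x < y) (hy : y < n) : (triS n (s, x, y)).card = 3 := by
  rw [card_eq_three]
  have h0 : ∀ t : ℕ, 0 < t → t < n → (t : ZMod n) ≠ 0 := by
    intro t h1 h2 h3
    have := cast_inj_aux n t 0 h2 (by omega) (by simpa using h3)
    omega
  refine ⟨_, _, _, ?_, ?_, ?_, rfl⟩
  · simpa using h0 x hx (by omega)
  · simpa using h0 y (by omega) hy
  · intro h
    have := cast_inj_aux n x y (by omega) hy (by simpa using h)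
    omega

lemma injOn_BS (n : ℕ) [NeZero n] (P : ZMod n → ℕ → Prop)
    (hP : ∀ s x y, 0 < x → x < y → y < n → P s y → P (s + (x : ZMod n)) (n - x) → False) :
    Set.InjOn (triS n) (BS n P : Set (ZMod n × ℕ × ℕ)) := by
  rintro ⟨s, x, y⟩ hq ⟨s', x', y'⟩ hq' h
  simp [BS] at hq hq'
  obtain ⟨⟨_, h1⟩, h2, h3, h4⟩ := hq
  obtain ⟨⟨_, h1'⟩, h2', h3', h4'⟩ := hq'
  rcases tri_inj n s s' x y x' y' h2 h3 h1 h2' h3' h1' h with h | h | h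
  · obtain ⟨rfl, rfl, rfl⟩ := h; rfl
  · obtain ⟨rfl, rfl, rfl⟩ := h
    exact (hP s x y h2 h3 h1 h4 h4').elim
  · exfalso
    obtain ⟨rfl, rfl, rfl⟩ := h
    refine hP (s + (y : ZMod n)) (n - y) (n - y + x) h2' h3' h1' h4' ?_
    have e : s + (y : ZMod n) + ((n - y : ℕ) : ZMod n) = s := by
      rw [add_assoc, ← Nat.cast_add, Nat.add_sub_cancel' h1.le]; simp
    rw [e, Nat.sub_sub_self h1.le]
    exact h4

/-- The total weight of short arcs. -/
def wS (n : ℕ) : ℕ := n * (∑ y ∈ range (n / 2), (y - 1)) + (n % 2) * ((n / 2 + 1) * (n / 2 - 1))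

lemma sum_split (n : ℕ) (f : ℕ → ℕ) :
    ∑ y ∈ range n, f y = ∑ y ∈ range (n / 2), (f y + f (n - 1 - y)) + (n % 2) * f (n / 2) := by
  obtain ⟨k, hk | hk⟩ := Nat.even_or_odd' n
  · have e : n / 2 = k := by omega
    have e2 : n % 2 = 0 := by omega
    rw [e, e2, hk, two_mul, sum_range_add, sum_add_distrib, zero_mul, add_zero,
      ← sum_range_reflect (fun x => f (k + x)) k]
    congr 1
    refine sum_congr rfl fun y hy => ?_
    simp at hy
    congr 1; omega
  · have e : n / 2 = k := by omega
    have e2 : n % 2 = 1 := by omega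
    have e3 : n = (k + 1) + k := by omega
    rw [e, e2]
    conv_lhs => rw [e3, sum_range_add, sum_range_succ,
      ← sum_range_reflect (fun x => f (k + 1 + x)) k]
    rw [sum_add_distrib, one_mul]
    have : ∑ j ∈ range k, f (k + 1 + (k - 1 - j)) = ∑ j ∈ range k, f (n - 1 - j) := by
      refine sum_congr rfl fun y hy => ?_
      simp at hy
      congr 1; omega
    rw [this]; ring

lemma sum_pred (j : ℕ) : 2 * ∑ y ∈ range (j + 1), (y - 1) = j * (j - 1) := by
  induction j with
  | zero => simp
  | succ j ih =>
    rw [sum_range_succ, mul_add, ih]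
    rcases j with _ | j
    · simp
    · simp; ring

lemma six_dvd (j : ℕ) : ∃ m, j * (j + 1) * (j + 2) = 6 * m := by
  induction j with
  | zero => exact ⟨0, rfl⟩
  | succ j ih =>
    obtain ⟨m, hm⟩ := ih
    obtain ⟨r, hr⟩ := Nat.even_mul_succ_self (j + 1)
    refine ⟨m + r, ?_⟩
    nlinarith

lemma six_choose (m : ℕ) : 6 * (m + 2).choose 3 = (m + 2) * (m + 1) * m := by
  have := Nat.descFactorial_eq_factorial_mul_choose (m + 2) 3
  simp [Nat.descFactorial, Nat.factorial] at this
  rw [← this]; ring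

lemma arith (n : ℕ) (hn : 3 ≤ n) :
    n.choose 3 = nabla n + (n / 2) * ((n - 2) / 2) + wS n := by
  obtain ⟨k, hk | hk⟩ := Nat.even_or_odd' n
  · obtain ⟨j, rfl⟩ : ∃ j, k = j + 2 := ⟨k - 2, by omega⟩
    subst hk
    have e1 : 2 * (j + 2) / 2 = j + 2 := by omega
    have e2 : (2 * (j + 2) - 2) / 2 = j + 1 := by omega
    have e3 : 2 * (j + 2) % 2 = 0 := by omega
    have e4 : ¬ Odd (2 * (j + 2)) := by simp
    have hs := sum_pred (j + 1)
    have hc := six_choose (2 * j + 2)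
    obtain ⟨m, hm⟩ := six_dvd (j + 1)
    have e5 : 2 * (j + 2) * (2 * (j + 2) - 2) * (2 * (j + 2) + 2) / 24 = 2 * m := by
      have : 2 * (j + 2) - 2 = 2 * (j + 1) := by omega
      rw [this]
      apply Nat.div_eq_of_eq_mul_left (by norm_num)
      nlinarith
    rw [nabla, if_neg e4, wS, e1, e2, e3, e5]
    have e6 : 2 * (j + 2) = 2 * j + 2 + 2 := by ring
    rw [← e6] at hc
    simp only [Nat.add_sub_cancel] at hs
    have : j + 1 + 1 = j + 2 := rfl
    rw [this] at hs
    generalize ∑ y ∈ range (j + 2), (y - 1) = S at *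
    nlinarith
  · obtain ⟨j, rfl⟩ : ∃ j, k = j + 1 := ⟨k - 1, by omega⟩
    subst hk
    have e1 : (2 * (j + 1) + 1) / 2 = j + 1 := by omega
    have e2 : (2 * (j + 1) + 1 - 2) / 2 = j := by omega
    have e3 : (2 * (j + 1) + 1) % 2 = 1 := by omega
    have e4 : Odd (2 * (j + 1) + 1) := by simp
    have hs := sum_pred j
    have hc := six_choose (2 * j + 1)
    obtain ⟨m, hm⟩ : ∃ m, (j + 1) * (j + 2) * (2 * j + 3) = 6 * m := by
      obtain ⟨m, hm⟩ := six_dvd (j + 1)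
      obtain ⟨m', hm'⟩ := six_dvd j
      exact ⟨m + m', by nlinarith⟩
    have e5 : (2 * (j + 1) + 1) * (2 * (j + 1) + 1 - 1) * (2 * (j + 1) + 1 + 1) / 24 = m := by
      have : 2 * (j + 1) + 1 - 1 = 2 * (j + 1) := by omega
      rw [this]
      apply Nat.div_eq_of_eq_mul_left (by norm_num)
      nlinarith
    rw [nabla, if_pos e4, wS, e1, e2, e3, e5]
    have e6 : 2 * (j + 1) + 1 = 2 * j + 1 + 2 := by ring
    rw [← e6] at hc
    simp only [Nat.add_sub_cancel]
    generalize ∑ y ∈ range (j + 1), (y - 1) = S at *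
    rcases j with _ | j
    · simp at *; omega
    · simp only [Nat.add_sub_cancel] at hs
      nlinarith

/-- The chosen light arcs. -/
def LS (n : ℕ) (H : Finset (Finset (ZMod n))) (s : ZMod n) (y : ℕ) : Prop :=
  ¬ HeavyS n H s y ∧ (2 * y + 1 ≤ n ∨ HeavyS n H (s + (y : ZMod n)) (n - 1 - y))

lemma LS_excl (n : ℕ) (H : Finset (Finset (ZMod n))) (s : ZMod n) (x y : ℕ)
    (hx : 0 < x) (hxy : x < y) (hy : y < n) (h1 : LS n H s y)
    (h2 : LS n H (s + (x : ZMod n)) (n - x)) : False := by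
  obtain ⟨a1, a2⟩ := h1
  obtain ⟨b1, b2⟩ := h2
  rcases b2 with b2 | b2
  · rcases a2 with a2 | a2
    · omega
    · apply b1
      refine heavy_mono n H _ (y - x) (n - 1 - y) (n - x) (by omega) ?_
      rw [add_assoc, ← Nat.cast_add, Nat.add_sub_cancel' hxy.le]
      exact a2
  · apply a1
    refine heavy_mono n H _ 0 (n - 1 - (n - x)) y (by omega) ?_
    rw [add_assoc, ← Nat.cast_add, Nat.add_sub_cancel' (by omega)] at b2
    simpa using b2

lemma LS_pair (n : ℕ) [NeZero n] (H : Finset (Finset (ZMod n)))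
    (hM : ¬ HasM1 n H) (hS : ¬ HasS1 n H) (y : ℕ) (hy : 2 * y + 1 ≤ n) :
    n ≤ cS n (LS n H) y + cS n (LS n H) (n - 1 - y) := by
  classical
  have h0 : (univ : Finset (ZMod n)).card = n := by simp [ZMod.card]
  rw [← card_filter_add_card_filter_not (fun s : ZMod n => LS n H s y)] at h0
  have h1 : (univ.filter (fun s : ZMod n => ¬ LS n H s y)).card ≤ cS n (LS n H) (n - 1 - y) := by
    refine card_le_card_of_injOn (fun s => s + ((y + 1 : ℕ) : ZMod n)) ?_ ?_
    · intro s hs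
      simp only [coe_filter, mem_univ, true_and, Set.mem_ofPred_eq] at hs ⊢
      have hh : HeavyS n H s y := by
        by_contra hc
        exact hs ⟨hc, Or.inl hy⟩
      refine ⟨fun h => heavy_conflict' n H hM hS s y (by omega) hh h, Or.inr ?_⟩
      have e : n - 1 - (n - 1 - y) = y := by omega
      have e2 : y + 1 + (n - 1 - y) = n := by omega
      rw [e, add_assoc, ← Nat.cast_add, e2]
      simpa using hh
    · intro a _ b _ hab
      simpa using hab
  have h2 : cS n (LS n H) y = (univ.filter (fun s : ZMod n => LS n H s y)).card := by
    unfold cS; congr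
  omega

lemma upper (n : ℕ) [NeZero n] (H : Finset (Finset (ZMod n))) (hH : IsCgh n H)
    (hM : ¬ HasM1 n H) (hS : ¬ HasS1 n H) : H.card + wS n ≤ n.choose 3 := by
  classical
  have h1 : wS n ≤ (BS n (LS n H)).card := by
    rw [card_BS, sum_split, wS, mul_sum]
    apply add_le_add
    · refine sum_le_sum fun y hy => ?_
      simp at hy
      have := LS_pair n H hM hS y (by omega)
      calc n * (y - 1) ≤ (cS n (LS n H) y + cS n (LS n H) (n - 1 - y)) * (y - 1) :=
            Nat.mul_le_mul_right _ this
        _ ≤ _ := by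
            rw [add_mul]
            apply Nat.add_le_add_left
            apply Nat.mul_le_mul_left
            omega
    · rcases Nat.mod_two_eq_zero_or_one n with h | h
      · simp [h]
      · apply Nat.mul_le_mul_left
        apply Nat.mul_le_mul_right
        have := LS_pair n H hM hS (n / 2) (by omega)
        have e : n - 1 - n / 2 = n / 2 := by omega
        rw [e] at this
        omega
  have h2 : ((BS n (LS n H)).image (triS n)).card = (BS n (LS n H)).card :=
    card_image_of_injOn (injOn_BS n _ (LS_excl n H))
  have h3 : Disjoint H ((BS n (LS n H)).image (triS n)) := by
    rw [disjoint_right]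
    intro e he heH
    rw [mem_image] at he
    obtain ⟨⟨s, x, y⟩, hq, rfl⟩ := he
    simp [BS] at hq
    obtain ⟨⟨_, a1⟩, a2, a3, a4⟩ := hq
    exact a4.1 ⟨0, x, y, a2, a3, le_rfl, by simpa [triS] using heH⟩
  have h4 : H ∪ (BS n (LS n H)).image (triS n) ⊆ powersetCard 3 univ := by
    intro e he
    rw [mem_powersetCard]
    refine ⟨subset_univ _, ?_⟩
    rw [mem_union, mem_image] at he
    rcases he with he | ⟨⟨s, x, y⟩, hq, rfl⟩
    · exact hH e he
    · simp [BS] at hq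
      exact tri_card n s x y hq.2.1 hq.2.2.1 hq.1.2
  have h5 := card_le_card h4
  rw [card_union_of_disjoint h3, h2, card_powersetCard, card_univ, ZMod.card] at h5
  omega

/-- The light arcs of the extremal construction. -/
def CanS (n : ℕ) (s : ZMod n) (y : ℕ) : Prop :=
  2 * y + 1 < n ∨ (2 * y + 1 = n ∧ y ≤ s.val)

lemma CanS_excl (n : ℕ) (s : ZMod n) (x y : ℕ)
    (hx : 0 < x) (hxy : x < y) (hy : y < n) (h1 : CanS n s y)
    (h2 : CanS n (s + (x : ZMod n)) (n - x)) : False := by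
  unfold CanS at *
  omega

lemma card_can (n : ℕ) [NeZero n] : (BS n (CanS n)).card = wS n := by
  classical
  rw [card_BS, sum_split, wS, mul_sum]
  congr 1
  · refine sum_congr rfl fun y hy => ?_
    simp at hy
    have h1 : cS n (CanS n) y = n := by
      unfold cS
      rw [filter_true_of_mem]
      · simp [ZMod.card]
      · intro s _; left; omega
    have h2 : cS n (CanS n) (n - 1 - y) = 0 := by
      unfold cS
      rw [card_eq_zero, filter_eq_empty_iff]
      intro s _ h
      unfold CanS at h
      omega
    rw [h1, h2]; simp
  · rcases Nat.mod_two_eq_zero_or_one n with h | h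
    · simp [h]
    · congr 2
      have : cS n (CanS n) (n / 2) = (Ico (n / 2) n).card := by
        unfold cS
        refine card_bij' (fun s _ => s.val) (fun t _ => (t : ZMod n)) ?_ ?_ ?_ ?_
        · intro s hs
          rw [mem_filter] at hs
          have h2 := hs.2
          unfold CanS at h2
          rw [mem_Ico]
          exact ⟨by omega, ZMod.val_lt s⟩
        · intro t ht
          rw [mem_Ico] at ht
          rw [mem_filter]
          refine ⟨mem_univ _, ?_⟩
          unfold CanS
          rw [ZMod.val_natCast, Nat.mod_eq_of_lt ht.2]
          omega
        · intro s _
          simp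
        · intro t ht
          simp at ht
          simp [Nat.mod_eq_of_lt ht.2]
      rw [this]; simp; omega

lemma lower (n : ℕ) [NeZero n] : ∃ H : Finset (Finset (ZMod n)),
    IsCgh n H ∧ ¬ HasM1 n H ∧ ¬ HasS1 n H ∧ H.card + wS n = n.choose 3 := by
  classical
  have hsub : (BS n (CanS n)).image (triS n) ⊆ powersetCard 3 univ := by
    intro e he
    rw [mem_powersetCard]
    refine ⟨subset_univ _, ?_⟩
    rw [mem_image] at he
    obtain ⟨⟨s, x, y⟩, hq, rfl⟩ := he
    simp [BS] at hq
    exact tri_card n s x y hq.2.1 hq.2.2.1 hq.1.2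
  have hno : ∀ a b c : ZMod n, 0 < (b - a).val → (b - a).val < (c - a).val →
      ({a, b, c} : Finset (ZMod n)) ∈ powersetCard 3 univ \ (BS n (CanS n)).image (triS n) →
      ¬ CanS n a (c - a).val := by
    intro a b c h1 h2 h3 h4
    rw [mem_sdiff] at h3
    apply h3.2
    rw [mem_image]
    refine ⟨(a, (b - a).val, (c - a).val), ?_, ?_⟩
    · simp only [BS, mem_filter, mem_product, mem_univ, mem_range, true_and]
      exact ⟨⟨ZMod.val_lt _, ZMod.val_lt _⟩, h1, h2, h4⟩
    · simp [triS]
  -- every point is the base plus its offset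
  have hoff : ∀ a b c : ZMod n, (b - a).val ≤ (c - a).val →
      (c - b).val = (c - a).val - (b - a).val := by
    intro a b c h
    have := val_sub_aux n a (b - a).val (c - a).val h
      (by have := ZMod.val_lt (c - a); omega)
    simpa using this
  refine ⟨powersetCard 3 univ \ (BS n (CanS n)).image (triS n), ?_, ?_, ?_, ?_⟩
  · intro e he
    rw [mem_sdiff, mem_powersetCard] at he
    exact he.1.2
  · rintro ⟨a₁, a₂, a₃, b₁, b₂, b₃, hc, hA, hB⟩
    simp only [CWList, List.map, List.Chain', List.isChain_cons_cons, List.isChain_singleton, and_true] at hc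
    obtain ⟨c1, c2, c3, c4, c5⟩ := hc
    have l := ZMod.val_lt (b₃ - a₁)
    have o1 := hoff a₁ b₁ b₂ (by omega)
    have o2 := hoff a₁ b₁ b₃ (by omega)
    have n1 := hno a₁ a₂ a₃ c1 c2 hA
    have n2 := hno b₁ b₂ b₃ (by omega) (by omega) hB
    unfold CanS at n1 n2
    omega
  · rintro ⟨v, a₁, a₂, b₁, b₂, hc, hA, hB⟩
    simp only [CWList, List.map, List.Chain', List.isChain_cons_cons, List.isChain_singleton, and_true] at hc
    obtain ⟨c1, c2, c3, c4⟩ := hc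
    have l := ZMod.val_lt (b₂ - v)
    have o1 := hoff v b₁ b₂ (by omega)
    have n1 := hno v a₁ a₂ c1 c2 hA
    have o2 : (v - b₁).val = n - (b₁ - v).val := by
      have := val_sub_aux n v (b₁ - v).val n (by omega) (by omega)
      simpa using this
    have hB' : ({b₁, b₂, v} : Finset (ZMod n)) ∈
        powersetCard 3 univ \ (BS n (CanS n)).image (triS n) := by
      convert hB using 1
      ext t; simp; tauto
    have n2 := hno b₁ b₂ v (by omega) (by omega) hB'
    have hb : b₁ = v + ((b₁ - v).val : ZMod n) := by simp
    have hbv : b₁.val = (v.val + (b₁ - v).val) % n := by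
      conv_lhs => rw [hb, ZMod.val_add]
      simp
    unfold CanS at n1 n2
    have m1 : v.val < (a₂ - v).val := by omega
    rw [Nat.mod_eq_of_lt (by omega)] at hbv
    omega
  · have h2 : ((BS n (CanS n)).image (triS n)).card = wS n := by
      rw [card_image_of_injOn (injOn_BS n _ (CanS_excl n)), card_can]
    have := card_sdiff_add_card_eq_card hsub
    rw [h2, card_powersetCard, card_univ, ZMod.card] at this
    exact this

theorem ex_M1_S1 (n : ℕ) (hn : 3 ≤ n) :
    IsGreatest {m : ℕ | ∃ H : Finset (Finset (ZMod n)),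
        IsCgh n H ∧ ¬ HasM1 n H ∧ ¬ HasS1 n H ∧ H.card = m}
      (nabla n + (n / 2) * ((n - 2) / 2)) := by
  haveI : NeZero n := ⟨by omega⟩
  have ha := arith n hn
  constructor
  · obtain ⟨H, h1, h2, h3, h4⟩ := lower n
    exact ⟨H, h1, h2, h3, by omega⟩
  · rintro m ⟨H, h1, h2, h3, rfl⟩
    have := upper n H h1 h2 h3
    omega
end

section
/- For every integer n ≥ 3, the maximum number of triples in an M_3-free cgh on Ω_n equals C(n,3) − C(n−3,3); that is, ex_circ(n, M_3) = C(n,3) − C(n−3,3), where C(m,3) denotes the binomial coefficient m choose 3 (equal to 0 when m < 3). -/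
/-- `H` contains a copy of the configuration `M₃`: two vertex-disjoint triples
whose six vertices occur in clockwise cyclic order `a₁, b₁, a₂, b₂, a₃, b₃`. -/
def HasM3 (n : ℕ) (H : Finset (Finset (ZMod n))) : Prop :=
  ∃ a₁ a₂ a₃ b₁ b₂ b₃ : ZMod n,
    CWList n [a₁, b₁, a₂, b₂, a₃, b₃] ∧
    ({a₁, a₂, a₃} : Finset (ZMod n)) ∈ H ∧ ({b₁, b₂, b₃} : Finset (ZMod n)) ∈ H

/-- Noncrossing ordered pairs on `{0,…,m+1}`: at most `2m+1` of them. -/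
lemma noncross_pairs (m : ℕ) : ∀ G : Finset (ℕ × ℕ),
    (∀ p ∈ G, p.1 < p.2 ∧ p.2 < m + 2) →
    (∀ p ∈ G, ∀ q ∈ G, ¬ (p.1 < q.1 ∧ q.1 < p.2 ∧ p.2 < q.2)) →
    G.card ≤ 2 * m + 1 := by
  induction m with
  | zero =>
    intro G h1 _
    have : G ⊆ {(0, 1)} := by
      rintro ⟨a, b⟩ hp
      have := h1 _ hp
      simp at this ⊢
      omega
    simpa using Finset.card_le_card this
  | succ m ih =>
    intro G h1 h2
    classical
    set A := G.filter (fun p => p.2 < m + 2) with hA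
    set B := G.filter (fun p => p.2 = m + 2 ∧ p.1 < m + 1) with hB
    set C := G.filter (fun p => p.2 = m + 2 ∧ p.1 = m + 1) with hC
    have hsub : G ⊆ A ∪ B ∪ C := by
      rintro ⟨a, b⟩ hp
      have := h1 _ hp
      simp [hA, hB, hC, hp] at this ⊢
      omega
    set B' := B.image (fun p => (p.1, m + 1)) with hB'
    have hBcard : B'.card = B.card := by
      apply Finset.card_image_of_injOn
      rintro ⟨a, b⟩ hp ⟨c, d⟩ hq h
      simp [hB] at hp hq h ⊢
      omega
    have hCcard : C.card ≤ 1 := by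
      have : C ⊆ {(m + 1, m + 2)} := by
        rintro ⟨a, b⟩ hp
        simp [hC] at hp ⊢
        omega
      simpa using Finset.card_le_card this
    have hI : (A ∩ B').card ≤ 1 := by
      rw [Finset.card_le_one]
      have key : ∀ x ∈ A ∩ B', x.2 = m + 1 ∧ x ∈ G ∧ (x.1, m + 2) ∈ G ∧ x.1 < m + 1 := by
        rintro ⟨a, b⟩ hx
        simp only [hA, hB', hB, Finset.mem_inter, Finset.mem_filter, Finset.mem_image,
          Prod.exists, Prod.mk.injEq] at hx
        obtain ⟨⟨hx1, _⟩, c, d, ⟨hcd, rfl, h⟩, rfl, rfl⟩ := hx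
        exact ⟨rfl, hx1, hcd, h⟩
      rintro ⟨a, b⟩ hx ⟨c, d⟩ hy
      obtain ⟨x1, x2, x3, x4⟩ := key _ hx
      obtain ⟨y1, y2, y3, y4⟩ := key _ hy
      have e1 := h2 _ x2 _ y3
      have e2 := h2 _ y2 _ x3
      simp at *
      omega
    have hU : (A ∪ B').card ≤ 2 * m + 1 := by
      apply ih
      · rintro ⟨a, b⟩ hp
        simp only [hA, hB', hB, Finset.mem_union, Finset.mem_filter, Finset.mem_image,
          Prod.exists, Prod.mk.injEq] at hp
        rcases hp with ⟨h, h'⟩ | ⟨c, d, ⟨hcd, rfl, h⟩, rfl, rfl⟩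
        · exact ⟨(h1 _ h).1, h'⟩
        · exact ⟨h, by simp⟩
      · have key : ∀ x ∈ A ∪ B', x.2 < m + 2 ∧ (x ∈ G ∨ (x.2 = m + 1 ∧ (x.1, m + 2) ∈ G)) := by
          rintro ⟨a, b⟩ hp
          simp only [hA, hB', hB, Finset.mem_union, Finset.mem_filter, Finset.mem_image,
            Prod.exists, Prod.mk.injEq] at hp
          rcases hp with ⟨h, h'⟩ | ⟨c, d, ⟨hcd, rfl, h⟩, rfl, rfl⟩
          · exact ⟨h', Or.inl h⟩
          · exact ⟨by simp, Or.inr ⟨rfl, hcd⟩⟩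
        rintro ⟨a, b⟩ hp ⟨c, d⟩ hq ⟨i1, i2, i3⟩
        obtain ⟨p1, p2⟩ := key _ hp
        obtain ⟨q1, q2⟩ := key _ hq
        simp only at *
        rcases p2 with p2 | ⟨p2, p3⟩
        · rcases q2 with q2 | ⟨q2, q3⟩
          · exact h2 _ p2 _ q2 ⟨i1, i2, i3⟩
          · exact h2 _ p2 _ q3 ⟨i1, i2, by simp only; omega⟩
        · omega
    have := Finset.card_le_card hsub
    have h3 := Finset.card_union_le (A ∪ B) C
    have h4 := Finset.card_union_le A B
    have h5 := Finset.card_union_add_card_inter A B'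
    omega

/-- Ordered triples with no interlacing pair. -/
lemma noncross_triples (k : ℕ) : ∀ H : Finset (ℕ × ℕ × ℕ),
    (∀ p ∈ H, p.1 < p.2.1 ∧ p.2.1 < p.2.2 ∧ p.2.2 < k + 3) →
    (∀ p ∈ H, ∀ q ∈ H, ¬ (p.1 < q.1 ∧ q.1 < p.2.1 ∧ p.2.1 < q.2.1 ∧ q.2.1 < p.2.2 ∧
      p.2.2 < q.2.2)) →
    H.card + k.choose 3 ≤ (k + 3).choose 3 := by
  induction k with
  | zero =>
    intro H h1 _
    have : H ⊆ {(0, 1, 2)} := by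
      rintro ⟨a, b, c⟩ hp
      have := h1 _ hp
      simp at this ⊢
      omega
    simpa using Finset.card_le_card this
  | succ k ih =>
    intro H h1 h2
    classical
    set A := H.filter (fun p => p.2.2 < k + 3) with hA
    set B := H.filter (fun p => p.2.2 = k + 3 ∧ p.2.1 < k + 2) with hB
    set C := H.filter (fun p => p.2.2 = k + 3 ∧ p.2.1 = k + 2) with hC
    have hsub : H ⊆ A ∪ B ∪ C := by
      rintro ⟨a, b, c⟩ hp
      have := h1 _ hp
      simp [hA, hB, hC, hp] at this ⊢
      omega
    set B' := B.image (fun p => (p.1, p.2.1, k + 2)) with hB'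
    have hBcard : B'.card = B.card := by
      apply Finset.card_image_of_injOn
      rintro ⟨a, b, c⟩ hp ⟨a', b', c'⟩ hq h
      simp [hB] at hp hq h ⊢
      omega
    have hCcard : C.card ≤ k + 2 := by
      have : C ⊆ (Finset.range (k + 2)).image (fun a => (a, k + 2, k + 3)) := by
        rintro ⟨a, b, c⟩ hp
        simp [hC] at hp ⊢
        have := h1 _ hp.1
        simp at this
        omega
      exact (Finset.card_le_card this).trans (Finset.card_image_le.trans (by simp))
    have hI : (A ∩ B').card ≤ 2 * k + 1 := by
      have key : ∀ x ∈ A ∩ B', x.2.2 = k + 2 ∧ x ∈ H ∧ (x.1, x.2.1, k + 3) ∈ H ∧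
          x.2.1 < k + 2 ∧ x.1 < x.2.1 := by
        rintro ⟨a, b, c⟩ hx
        simp only [hA, hB', hB, Finset.mem_inter, Finset.mem_filter, Finset.mem_image,
          Prod.exists, Prod.mk.injEq] at hx
        obtain ⟨⟨hx1, _⟩, a', b', c', ⟨hcd, rfl, h⟩, rfl, rfl, rfl⟩ := hx
        exact ⟨rfl, hx1, hcd, h, (h1 _ hx1).1⟩
      have hinj : ((A ∩ B').image (fun p => (p.1, p.2.1))).card = (A ∩ B').card := by
        apply Finset.card_image_of_injOn
        rintro ⟨a, b, c⟩ hp ⟨a', b', c'⟩ hq h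
        have := key _ hp
        have := key _ hq
        simp at *
        omega
      rw [← hinj]
      apply noncross_pairs
      · rintro ⟨a, b⟩ hp
        simp only [Finset.mem_image, Prod.mk.injEq] at hp
        obtain ⟨x, hx, rfl, rfl⟩ := hp
        have := key _ hx
        exact ⟨this.2.2.2.2, this.2.2.2.1⟩
      · rintro ⟨a, b⟩ hp ⟨c, d⟩ hq ⟨i1, i2, i3⟩
        simp only [Finset.mem_image, Prod.mk.injEq] at hp hq
        obtain ⟨x, hx, rfl, rfl⟩ := hp
        obtain ⟨y, hy, rfl, rfl⟩ := hq
        obtain ⟨x1, x2, x3, x4, x5⟩ := key _ hx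
        obtain ⟨y1, y2, y3, y4, y5⟩ := key _ hy
        exact h2 _ x2 _ y3 ⟨i1, i2, i3, by simp only; omega, by simp only; omega⟩
    have hU : (A ∪ B').card + k.choose 3 ≤ (k + 3).choose 3 := by
      apply ih
      · rintro ⟨a, b, c⟩ hp
        simp only [hA, hB', hB, Finset.mem_union, Finset.mem_filter, Finset.mem_image,
          Prod.exists, Prod.mk.injEq] at hp
        rcases hp with ⟨h, h'⟩ | ⟨a', b', c', ⟨hcd, rfl, h⟩, rfl, rfl, rfl⟩
        · exact ⟨(h1 _ h).1, (h1 _ h).2.1, h'⟩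
        · exact ⟨(h1 _ hcd).1, h, by simp⟩
      · have key : ∀ x ∈ A ∪ B', x.2.2 < k + 3 ∧
            (x ∈ H ∨ (x.2.2 = k + 2 ∧ (x.1, x.2.1, k + 3) ∈ H)) := by
          rintro ⟨a, b, c⟩ hp
          simp only [hA, hB', hB, Finset.mem_union, Finset.mem_filter, Finset.mem_image,
            Prod.exists, Prod.mk.injEq] at hp
          rcases hp with ⟨h, h'⟩ | ⟨a', b', c', ⟨hcd, rfl, h⟩, rfl, rfl, rfl⟩
          · exact ⟨h', Or.inl h⟩
          · exact ⟨by simp, Or.inr ⟨rfl, hcd⟩⟩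
        rintro ⟨a, b, c⟩ hp ⟨a', b', c'⟩ hq ⟨i1, i2, i3, i4, i5⟩
        obtain ⟨p1, p2⟩ := key _ hp
        obtain ⟨q1, q2⟩ := key _ hq
        simp only at *
        rcases p2 with p2 | ⟨p2, p3⟩
        · rcases q2 with q2 | ⟨q2, q3⟩
          · exact h2 _ p2 _ q2 ⟨i1, i2, i3, i4, i5⟩
          · exact h2 _ p2 _ q3 ⟨i1, i2, i3, i4, by simp only; omega⟩
        · omega
    have := Finset.card_le_card hsub
    have h3 := Finset.card_union_le (A ∪ B) C
    have h4 := Finset.card_union_le A B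
    have h5 := Finset.card_union_add_card_inter A B'
    have e1 : (k + 1).choose 3 = k.choose 2 + k.choose 3 := Nat.choose_succ_succ k 2
    have e2 : (k + 1 + 3).choose 3 = (k + 3).choose 2 + (k + 3).choose 3 :=
      Nat.choose_succ_succ (k + 3) 2
    have e3 : (k + 3).choose 2 = (k + 2) + (k + 2).choose 2 := by
      simpa using Nat.choose_succ_succ (k + 2) 1
    have e4 : (k + 2).choose 2 = (k + 1) + (k + 1).choose 2 := by
      simpa using Nat.choose_succ_succ (k + 1) 1
    have e5 : (k + 1).choose 2 = k + k.choose 2 := by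
      simpa using Nat.choose_succ_succ k 1
    omega

/-- Every 3-set of `ZMod n` is listed by increasing representatives. -/
lemma exists_sorted (n : ℕ) [NeZero n] (e : Finset (ZMod n)) (he : e.card = 3) :
    ∃ a b c : ℕ, a < b ∧ b < c ∧ c < n ∧ e = {(a : ZMod n), (b : ZMod n), (c : ZMod n)} := by
  have main : ∀ x y z : ZMod n, e = {x, y, z} → x.val < y.val → y.val < z.val →
      ∃ a b c : ℕ, a < b ∧ b < c ∧ c < n ∧ e = {(a : ZMod n), (b : ZMod n), (c : ZMod n)} := by
    intro x y z h h1 h2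
    exact ⟨x.val, y.val, z.val, h1, h2, ZMod.val_lt z, by simpa using h⟩
  obtain ⟨x, y, z, hxy, hxz, hyz, rfl⟩ := Finset.card_eq_three.1 he
  have i1 : x.val ≠ y.val := fun h => hxy (ZMod.val_injective n h)
  have i2 : x.val ≠ z.val := fun h => hxz (ZMod.val_injective n h)
  have i3 : y.val ≠ z.val := fun h => hyz (ZMod.val_injective n h)
  rcases lt_or_gt_of_ne i1 with j1 | j1 <;> rcases lt_or_gt_of_ne i2 with j2 | j2 <;>
    rcases lt_or_gt_of_ne i3 with j3 | j3
  · exact main x y z rfl j1 j3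
  · exact main x z y (by ext; simp; tauto) j2 j3
  · omega
  · exact main z x y (by ext; simp; tauto) j2 j1
  · exact main y x z (by ext; simp; tauto) j1 j2
  · omega
  · exact main y z x (by ext; simp; tauto) j3 j2
  · exact main z y x (by ext; simp; tauto) j3 j1

lemma val_cast_sub (n : ℕ) [NeZero n] (a b : ℕ) (hab : a ≤ b) (hb : b < n) :
    ((b : ZMod n) - (a : ZMod n)).val = b - a := by
  rw [← Nat.cast_sub hab]
  exact ZMod.val_cast_of_lt (by omega)

lemma cw_iff (n : ℕ) (a b c d e f : ZMod n) : CWList n [a, b, c, d, e, f] ↔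
    0 < (b - a).val ∧ (b - a).val < (c - a).val ∧ (c - a).val < (d - a).val ∧
    (d - a).val < (e - a).val ∧ (e - a).val < (f - a).val := by
  simp [CWList, List.Chain']

lemma upper_s5 (n : ℕ) (hn : 3 ≤ n) (H : Finset (Finset (ZMod n))) (h3 : IsCgh n H)
    (hM : ¬ HasM3 n H) : H.card + (n - 3).choose 3 ≤ n.choose 3 := by
  classical
  haveI : NeZero n := ⟨by omega⟩
  set T := (Finset.range n ×ˢ Finset.range n ×ˢ Finset.range n).filter
    (fun p : ℕ × ℕ × ℕ => p.1 < p.2.1 ∧ p.2.1 < p.2.2 ∧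
      ({(p.1 : ZMod n), (p.2.1 : ZMod n), (p.2.2 : ZMod n)} : Finset (ZMod n)) ∈ H) with hT
  have hsub : H ⊆ T.image (fun p : ℕ × ℕ × ℕ =>
      ({(p.1 : ZMod n), (p.2.1 : ZMod n), (p.2.2 : ZMod n)} : Finset (ZMod n))) := by
    intro e he
    obtain ⟨a, b, c, h1, h2, h4, rfl⟩ := exists_sorted n e (h3 e he)
    refine Finset.mem_image.2 ⟨(a, b, c), ?_, rfl⟩
    simp only [hT, Finset.mem_filter, Finset.mem_product, Finset.mem_range]
    exact ⟨⟨by omega, by omega, h4⟩, h1, h2, he⟩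
  have hle : H.card ≤ T.card := (Finset.card_le_card hsub).trans Finset.card_image_le
  have := noncross_triples (n - 3) T ?_ ?_
  · rw [Nat.sub_add_cancel hn] at this
    omega
  · intro p hp
    simp only [hT, Finset.mem_filter, Finset.mem_product, Finset.mem_range] at hp
    omega
  · rintro ⟨a, b, c⟩ hp ⟨a', b', c'⟩ hq ⟨i1, i2, i3, i4, i5⟩
    simp only [hT, Finset.mem_filter, Finset.mem_product, Finset.mem_range] at hp hq i1 i2 i3 i4 i5
    refine hM ⟨a, b, c, a', b', c', ?_, hp.2.2.2, hq.2.2.2⟩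
    rw [cw_iff, val_cast_sub n, val_cast_sub n, val_cast_sub n, val_cast_sub n,
      val_cast_sub n] <;> omega

/-- The successor in `ZMod n` seen from a base point. -/
lemma val_succ_cases (n : ℕ) [NeZero n] (x : ZMod n) :
    (x + 1).val = x.val + 1 ∨ ((x + 1).val = 0 ∧ x.val + 1 = n) := by
  have hx := ZMod.val_lt x
  by_cases h : x.val + 1 < n
  · left
    have : x + 1 = ((x.val + 1 : ℕ) : ZMod n) := by simp
    rw [this, ZMod.val_cast_of_lt h]
  · right
    have h' : x.val + 1 = n := by omega
    have : x + 1 = ((x.val + 1 : ℕ) : ZMod n) := by simp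
    refine ⟨?_, h'⟩
    rw [this, h']
    simp

lemma lower_s5 (n : ℕ) (hn : 3 ≤ n) : ∃ H : Finset (Finset (ZMod n)),
    IsCgh n H ∧ ¬ HasM3 n H ∧ n.choose 3 ≤ H.card + (n - 3).choose 3 := by
  classical
  haveI : NeZero n := ⟨by omega⟩
  set P : Finset (ZMod n) → Prop := fun e => (0 : ZMod n) ∈ e ∨ ∃ x ∈ e, x + 1 ∈ e with hP
  set U := Finset.powersetCard 3 (Finset.univ : Finset (ZMod n)) with hU
  refine ⟨U.filter P, ?_, ?_, ?_⟩
  · intro e he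
    simp [hU] at he
    exact he.1
  · rintro ⟨a₁, a₂, a₃, b₁, b₂, b₃, hcw, ha, hb⟩
    rw [cw_iff] at hcw
    have hz : (a₁ - a₁).val = 0 := by simp
    have hs : ∀ x : ZMod n, (x + 1 - a₁).val = (x - a₁).val + 1 ∨
        ((x + 1 - a₁).val = 0 ∧ (x - a₁).val + 1 = n) := by
      intro x
      have : x + 1 - a₁ = (x - a₁) + 1 := by ring
      rw [this]
      exact val_succ_cases n _
    have hlt := ZMod.val_lt (b₃ - a₁)
    have ha0 : (0 : ZMod n) ∈ ({a₁, a₂, a₃} : Finset (ZMod n)) := by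
      rcases (Finset.mem_filter.1 ha).2 with h | ⟨x, hx, hx1⟩
      · exact h
      · exfalso
        have := hs x
        simp only [Finset.mem_insert, Finset.mem_singleton] at hx hx1
        rcases hx with h | h | h <;> rcases hx1 with h' | h' | h' <;> rw [h'] at this <;>
          rw [h] at this <;> omega
    have hb0 : (0 : ZMod n) ∈ ({b₁, b₂, b₃} : Finset (ZMod n)) := by
      rcases (Finset.mem_filter.1 hb).2 with h | ⟨x, hx, hx1⟩
      · exact h
      · exfalso
        have := hs x
        simp only [Finset.mem_insert, Finset.mem_singleton] at hx hx1
        rcases hx with h | h | h <;> rcases hx1 with h' | h' | h' <;> rw [h'] at this <;>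
          rw [h] at this <;> omega
    simp only [Finset.mem_insert, Finset.mem_singleton] at ha0 hb0
    rcases ha0 with h | h | h <;> rcases hb0 with h' | h' | h' <;>
      have hh := congrArg (fun t : ZMod n => (t - a₁).val) (h.symm.trans h') <;>
      omega
  · have hc := Finset.card_filter_add_card_filter_not (s := U) P
    have hUc : U.card = n.choose 3 := by simp [hU, ZMod.card]
    set S := (Finset.range (n - 3) ×ˢ Finset.range (n - 3) ×ˢ Finset.range (n - 3)).filter
      (fun p : ℕ × ℕ × ℕ => p.1 < p.2.1 ∧ p.2.1 < p.2.2) with hS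
    have hScard : S.card ≤ (n - 3).choose 3 := by
      have : S.card ≤ (Finset.powersetCard 3 (Finset.range (n - 3))).card := by
        apply Finset.card_le_card_of_injOn
          (fun p : ℕ × ℕ × ℕ => ({p.1, p.2.1, p.2.2} : Finset ℕ))
        · rintro ⟨a, b, c⟩ hp
          simp only [hS, Finset.coe_filter, Set.mem_setOf_eq, Finset.mem_product,
            Finset.mem_range] at hp
          simp only [Finset.mem_coe, Finset.mem_powersetCard]
          constructor
          · intro x hx
            simp at hx ⊢
            omega
          · rw [Finset.card_eq_three]
            exact ⟨a, b, c, by omega, by omega, by omega, rfl⟩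
        · rintro ⟨a, b, c⟩ hp ⟨a', b', c'⟩ hq h
          simp only [hS, Finset.coe_filter, Set.mem_setOf_eq, Finset.mem_product,
            Finset.mem_range] at hp hq
          simp only [Finset.ext_iff, Finset.mem_insert, Finset.mem_singleton] at h
          have q1 := (h a).1 (by simp)
          have q2 := (h b).1 (by simp)
          have q3 := (h c).1 (by simp)
          have q4 := (h a').2 (by simp)
          simp only [Prod.mk.injEq]
          omega
      simpa using this
    have hsub : U.filter (fun e => ¬ P e) ⊆ S.image (fun p : ℕ × ℕ × ℕ =>
        ({((p.1 + 1 : ℕ) : ZMod n), ((p.2.1 + 2 : ℕ) : ZMod n), ((p.2.2 + 3 : ℕ) : ZMod n)} :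
          Finset (ZMod n))) := by
      intro e he
      simp only [hU, Finset.mem_filter, Finset.mem_powersetCard] at he
      obtain ⟨⟨_, hcard⟩, hnP⟩ := he
      obtain ⟨a, b, c, h1, h2, h4, rfl⟩ := exists_sorted n e hcard
      have n1 : a ≠ 0 := by
        rintro rfl
        exact hnP (Or.inl (by simp))
      have n2 : b ≠ a + 1 := by
        rintro rfl
        exact hnP (Or.inr ⟨(a : ZMod n), by simp, by simp⟩)
      have n3 : c ≠ b + 1 := by
        rintro rfl
        exact hnP (Or.inr ⟨(b : ZMod n), by simp, by simp⟩)
      refine Finset.mem_image.2 ⟨(a - 1, b - 2, c - 3), ?_, ?_⟩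
      · simp only [hS, Finset.mem_filter, Finset.mem_product, Finset.mem_range]
        omega
      · have t1 : a - 1 + 1 = a := by omega
        have t2 : b - 2 + 2 = b := by omega
        have t3 : c - 3 + 3 = c := by omega
        simp only [t1, t2, t3]
    have := (Finset.card_le_card hsub).trans Finset.card_image_le
    omega

theorem ex_M3 (n : ℕ) (hn : 3 ≤ n) :
    IsGreatest {m : ℕ | ∃ H : Finset (Finset (ZMod n)),
        IsCgh n H ∧ ¬ HasM3 n H ∧ H.card = m}
      (n.choose 3 - (n - 3).choose 3) := by
  constructor
  · obtain ⟨H, h1, h2, h3⟩ := lower_s5 n hn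
    have := upper_s5 n hn H h1 h2
    exact ⟨H, h1, h2, by omega⟩
  · rintro m ⟨H, h1, h2, rfl⟩
    have := upper_s5 n hn H h1 h2
    omega
end
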